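/- (Sufficiency part of the feasibility characterization) If a contract satisfies the three conditions (i) w_1 ≤ w_2 ≤ ⋯ ≤ w_T; (ii) 0 ≤ p_1 ≤ U(λ_1, w_1); and (iii) for every k = 2, …, T, p_{k−1} + U(λ_{k−1}, w_k) − U(λ_{k−1}, w_{k−1}) ≤ p_k ≤ p_{k−1} + U(λ_k, w_k) − U(λ_k, w_{k−1}), then the contract is feasible, i.e., all IC and IR constraints hold. -/

import Mathlib

/-!
The Poisson tail `P(X_lam ≥ k)` is nondecreasing in `lam ≥ 0`: for `k ≥ 1` the distribution function
`exp (-x) * ∑_{i<k} x ^ i / i!` has derivative `-exp (-x) * x ^ (k - 1) / (k - 1)!`, because all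
other terms of the product rule cancel (`hasDerivAt_poissonCdf`). Summing over `k` in `(v, w]` shows
that the utility has increasing differences (`utility_increasing_diff`): a higher type values the
upgrade from `v` to `w ≥ v` channels at least as much as a lower type does.

Condition (iii) says that the price step between consecutive contract items is at least the lower
type's value of the upgrade and at most the higher type's. Chaining these steps, and using
increasing differences to express all the upgrade values in terms of a single type, gives the
IC constraint for every pair (`ic_down` and `ic_up`). Individual rationality follows from the IC
constraint against item `1`, which every type values at least as much as type `1` does; prices are
nonnegative because they start at `p 1 ≥ 0` and each price step is at least a nonnegative utility
increment.
-/

/-- Tail probability of a Poisson random variable with mean `lam` at threshold `k`. -/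
noncomputable def poissonTail (lam : ℝ) (k : ℕ) : ℝ :=
  1 - Real.exp (-lam) * ∑ i ∈ Finset.range k, lam ^ i / (Nat.factorial i : ℝ)

/-- Utility of a `lam`-type UAV obtaining `w` channels: `U(lam, w) = ∑_{k=1}^{w} P(X_lam ≥ k)`. -/
noncomputable def utility (lam : ℝ) (w : ℕ) : ℝ :=
  ∑ k ∈ Finset.Icc 1 w, poissonTail lam k

/-- A contract `(w, p)` for `T` types `lam 1 < ⋯ < lam T` is feasible if prices are
nonnegative, and the IC and IR constraints hold. -/
def Feasible (T : ℕ) (lam : ℕ → ℝ) (w : ℕ → ℕ) (p : ℕ → ℝ) : Prop :=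
  (∀ t, 1 ≤ t → t ≤ T → 0 ≤ p t) ∧
  (∀ t s, 1 ≤ t → t ≤ T → 1 ≤ s → s ≤ T → s ≠ t →
    utility (lam t) (w t) - p t ≥ utility (lam t) (w s) - p s) ∧
  (∀ t, 1 ≤ t → t ≤ T → utility (lam t) (w t) - p t ≥ 0)

/-- The sum of `x ^ i / i!` over `i ≤ k` has as derivative the sum over `i < k`, so the product
rule leaves only the top term. -/
lemma hasDerivAt_poissonCdf (k : ℕ) (x : ℝ) :
    HasDerivAt (fun x : ℝ => Real.exp (-x) *
      ∑ i ∈ Finset.range (k + 1), x ^ i / (Nat.factorial i : ℝ))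
      (-(Real.exp (-x) * (x ^ k / (Nat.factorial k : ℝ)))) x := by
  have hexp : HasDerivAt (fun x : ℝ => Real.exp (-x)) (-Real.exp (-x)) x := by
    simpa using (hasDerivAt_neg x).exp
  have hsum : ∀ n : ℕ, HasDerivAt
      (fun x : ℝ => ∑ i ∈ Finset.range (n + 1), x ^ i / (Nat.factorial i : ℝ))
      (∑ i ∈ Finset.range n, x ^ i / (Nat.factorial i : ℝ)) x := by
    intro n
    induction n with
    | zero => simpa using hasDerivAt_const x (1 : ℝ)
    | succ n ih =>
      rw [Finset.sum_range_succ _ n]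
      simp only [fun f : ℕ → ℝ => Finset.sum_range_succ f (n + 1)]
      refine ih.add ?_
      refine ((hasDerivAt_pow (n + 1) x).div_const ((n + 1).factorial : ℝ)).congr_deriv ?_
      have h1 : (n.factorial : ℝ) ≠ 0 := by positivity
      have h2 : (n : ℝ) + 1 ≠ 0 := by positivity
      rw [Nat.factorial_succ]
      push_cast
      field_simp
  refine (hexp.mul (hsum k)).congr_deriv ?_
  rw [Finset.sum_range_succ]
  ring

lemma poissonTail_mono {a b : ℝ} (ha : 0 ≤ a) (hab : a ≤ b) (k : ℕ) :
    poissonTail a k ≤ poissonTail b k := by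
  cases k with
  | zero => simp [poissonTail]
  | succ k =>
    have hanti : AntitoneOn (fun x : ℝ => Real.exp (-x) *
        ∑ i ∈ Finset.range (k + 1), x ^ i / (Nat.factorial i : ℝ)) (Set.Ici 0) := by
      refine antitoneOn_of_hasDerivWithinAt_nonpos (convex_Ici 0)
        (fun x _ => (hasDerivAt_poissonCdf k x).continuousAt.continuousWithinAt)
        (fun x _ => (hasDerivAt_poissonCdf k x).hasDerivWithinAt) ?_
      intro x hx
      rw [interior_Ici] at hx
      have hx0 : (0 : ℝ) < x := hx
      have : 0 ≤ Real.exp (-x) * (x ^ k / (Nat.factorial k : ℝ)) := by positivity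
      linarith
    exact sub_le_sub_left (hanti ha (ha.trans hab) hab) 1

lemma poissonTail_nonneg {a : ℝ} (ha : 0 ≤ a) (k : ℕ) : 0 ≤ poissonTail a k := by
  refine le_trans ?_ (poissonTail_mono le_rfl ha k)
  cases k with
  | zero => simp [poissonTail]
  | succ k => simp [poissonTail, Finset.sum_range_succ']

lemma utility_succ (a : ℝ) (w : ℕ) :
    utility a (w + 1) = utility a w + poissonTail a (w + 1) :=
  Finset.sum_Icc_succ_top (by omega) _

lemma utility_mono {a : ℝ} (ha : 0 ≤ a) {v w : ℕ} (hvw : v ≤ w) :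
    utility a v ≤ utility a w := by
  induction w, hvw using Nat.le_induction with
  | base => exact le_rfl
  | succ w _ ih =>
    rw [utility_succ]
    linarith [poissonTail_nonneg ha (w + 1)]

/-- The utility has increasing differences in the type and the number of channels. -/
lemma utility_increasing_diff {a b : ℝ} (ha : 0 ≤ a) (hab : a ≤ b) {v w : ℕ} (hvw : v ≤ w) :
    utility a w - utility a v ≤ utility b w - utility b v := by
  induction w, hvw using Nat.le_induction with
  | base => simp
  | succ w _ ih =>
    rw [utility_succ, utility_succ]
    linarith [poissonTail_mono ha hab (w + 1)]

/-- Under the upper bounds in (iii), no type gains by choosing the item of a lower type. -/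
lemma ic_down {T : ℕ} {lam : ℕ → ℝ} {w : ℕ → ℕ} {p : ℕ → ℝ}
    (hpos : ∀ t, 1 ≤ t → t ≤ T → 0 < lam t)
    (hmono : ∀ i j, 1 ≤ i → i < j → j ≤ T → lam i < lam j)
    (hw : ∀ i j, 1 ≤ i → i ≤ j → j ≤ T → w i ≤ w j)
    (hpk : ∀ k, 2 ≤ k → k ≤ T →
      p k ≤ p (k - 1) + utility (lam k) (w k) - utility (lam k) (w (k - 1)))
    {s t : ℕ} (hs : 1 ≤ s) (hst : s ≤ t) (ht : t ≤ T) :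
    utility (lam t) (w s) - p s ≤ utility (lam t) (w t) - p t := by
  induction t, hst using Nat.le_induction with
  | base => exact le_rfl
  | succ t hst ih =>
    have hstep := hpk (t + 1) (by omega) ht
    rw [Nat.add_sub_cancel] at hstep
    have hdiff := utility_increasing_diff (hpos t (by omega) (by omega)).le
      (hmono t (t + 1) (by omega) (by omega) ht).le (hw s t hs hst (by omega))
    linarith [ih (by omega)]

/-- Under the lower bounds in (iii), no type gains by choosing the item of a higher type. -/
lemma ic_up {T : ℕ} {lam : ℕ → ℝ} {w : ℕ → ℕ} {p : ℕ → ℝ}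
    (hpos : ∀ t, 1 ≤ t → t ≤ T → 0 < lam t)
    (hmono : ∀ i j, 1 ≤ i → i < j → j ≤ T → lam i < lam j)
    (hw : ∀ i j, 1 ≤ i → i ≤ j → j ≤ T → w i ≤ w j)
    (hpk : ∀ k, 2 ≤ k → k ≤ T →
      p (k - 1) + utility (lam (k - 1)) (w k) - utility (lam (k - 1)) (w (k - 1)) ≤ p k)
    {s t : ℕ} (ht : 1 ≤ t) (hts : t ≤ s) (hs : s ≤ T) :
    utility (lam t) (w s) - p s ≤ utility (lam t) (w t) - p t := by
  induction s, hts using Nat.le_induction with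
  | base => exact le_rfl
  | succ s hts ih =>
    have hstep := hpk (s + 1) (by omega) hs
    rw [Nat.add_sub_cancel] at hstep
    have hlam : lam t ≤ lam s := by
      rcases hts.eq_or_lt with rfl | h
      · exact le_rfl
      · exact (hmono t s ht h (by omega)).le
    have hdiff := utility_increasing_diff (hpos t ht (by omega)).le hlam
      (hw s (s + 1) (by omega) (by omega) hs)
    linarith [ih (by omega)]

theorem feasible_sufficient_conditions (T : ℕ) (hT : 1 ≤ T) (lam : ℕ → ℝ) (w : ℕ → ℕ)
    (p : ℕ → ℝ) (hpos : ∀ t, 1 ≤ t → t ≤ T → 0 < lam t)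
    (hmono : ∀ i j, 1 ≤ i → i < j → j ≤ T → lam i < lam j)
    (hw : ∀ i j, 1 ≤ i → i ≤ j → j ≤ T → w i ≤ w j)
    (hp1 : 0 ≤ p 1 ∧ p 1 ≤ utility (lam 1) (w 1))
    (hpk : ∀ k, 2 ≤ k → k ≤ T →
      p (k - 1) + utility (lam (k - 1)) (w k) - utility (lam (k - 1)) (w (k - 1)) ≤ p k ∧
      p k ≤ p (k - 1) + utility (lam k) (w k) - utility (lam k) (w (k - 1))) :
    Feasible T lam w p := by
  have hdown := fun {s t : ℕ} => ic_down (s := s) (t := t) hpos hmono hw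
    (fun k h2 hk => (hpk k h2 hk).2)
  refine ⟨?_, ?_, ?_⟩
  · intro t ht
    induction t, ht using Nat.le_induction with
    | base => exact fun _ => hp1.1
    | succ t ht ih =>
      intro htT
      have hstep := (hpk (t + 1) (by omega) htT).1
      rw [Nat.add_sub_cancel] at hstep
      linarith [ih (by omega), utility_mono (hpos t ht (by omega)).le
        (hw t (t + 1) ht (by omega) htT)]
  · intro t s ht htT hs hsT _
    rcases le_total s t with h | h
    · exact hdown hs h htT
    · exact ic_up hpos hmono hw (fun k h2 hk => (hpk k h2 hk).1) ht h hsT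
  · intro t ht htT
    have hlam : lam 1 ≤ lam t := by
      rcases ht.eq_or_lt with rfl | h
      · exact le_rfl
      · exact (hmono 1 t le_rfl h htT).le
    -- Comparing with zero channels turns increasing differences into monotonicity in the type.
    have hfirst := utility_increasing_diff (hpos 1 le_rfl hT).le hlam (Nat.zero_le (w 1))
    have hzero : ∀ a, utility a 0 = 0 := fun a => by simp [utility]
    rw [hzero, hzero] at hfirst
    linarith [hdown le_rfl ht htT, hp1.2]
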